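/- Let γ = (γ_j)_{j≥1} be non-increasing nonnegative weights with ∑_{j≥1} γ_j < ∞, and let δ > 0. Then there exists a constant C > 0 (depending only on γ and δ, independent of p and s) such that for every prime p and every s ∈ ℕ the Hua–Wang multi-set R_{p²,s} (counted with multiplicity) satisfies D*_γ(R_{p²,s}) ≤ C·p^{−(1−δ)}. -/

import Mathlib

open Finset

/-- Local discrepancy of the point set `x` at the corner point `t`:
`Δ(t) = #{n : x_n ∈ [0,t)}/N − ∏_j t_j`. -/
noncomputable def localDisc {N s : ℕ} (x : Fin N → Fin s → ℝ) (t : Fin s → ℝ) : ℝ :=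
  ((univ.filter fun n => ∀ j, x n j < t j).card : ℝ) / N - ∏ j, t j

/-- `(z_u, 1)`: the vector `z` with all components whose index is not in `u`
replaced by `1`. -/
def projPoint {s : ℕ} (u : Finset (Fin s)) (z : Fin s → ℝ) : Fin s → ℝ :=
  fun j => if j ∈ u then z j else 1

/-- The weight `γ_u = ∏_{j ∈ u} γ_j` of a set of coordinates `u ⊆ {1,…,s}`;
coordinate `j : Fin s` carries weight `γ (j+1)` (weights are indexed from `1`). -/
noncomputable def weightOf {s : ℕ} (γ : ℕ → ℝ) (u : Finset (Fin s)) : ℝ :=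
  ∏ j ∈ u, γ (j.1 + 1)

/-- Weighted star-discrepancy
`D*_γ(x) = sup_{z ∈ [0,1]^s} max_{∅ ≠ u ⊆ [s]} γ_u |Δ(z_u,1)|`. -/
noncomputable def wStarDisc {N s : ℕ} (γ : ℕ → ℝ) (x : Fin N → Fin s → ℝ) : ℝ :=
  sSup {d : ℝ | ∃ z : Fin s → ℝ, (∀ j, z j ∈ Set.Icc (0:ℝ) 1) ∧
    ∃ u : Finset (Fin s), u.Nonempty ∧
      d = weightOf γ u * |localDisc x (projPoint u z)|}

/-- `N`-th minimal weighted star-discrepancy `disc_γ(N,s)`. -/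
noncomputable def wMinDisc (γ : ℕ → ℝ) (N s : ℕ) : ℝ :=
  sInf {d : ℝ | ∃ x : Fin N → Fin s → ℝ,
    (∀ n j, x n j ∈ Set.Ico (0:ℝ) 1) ∧ d = wStarDisc γ x}

/-- Korobov's `p`-set `P_{p,s}`: the points `x_n = ({n/p}, {n²/p}, …, {n^s/p})`
for `n = 0, 1, …, p−1`. -/
noncomputable def korobovP (p s : ℕ) : Fin p → Fin s → ℝ :=
  fun n j => Int.fract ((n.1 : ℝ) ^ (j.1 + 1) / p)

/-- Korobov's `p²`-set `Q_{p²,s}`: the points `x_n = ({n/p²}, {n²/p²}, …, {n^s/p²})`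
for `n = 0, 1, …, p²−1`. -/
noncomputable def korobovQ (p s : ℕ) : Fin (p ^ 2) → Fin s → ℝ :=
  fun n j => Int.fract ((n.1 : ℝ) ^ (j.1 + 1) / ((p : ℝ) ^ 2))

/-- The Hua–Wang multi-set `R_{p²,s}`: the `p²` points
`x_{a,k} = ({k/p}, {ak/p}, …, {a^{s−1}k/p})` for `a, k = 0, …, p−1`, counted with
multiplicity; here the index `n < p²` encodes `a = n / p` and `k = n % p`. -/
noncomputable def huaWangR (p s : ℕ) : Fin (p ^ 2) → Fin s → ℝ :=
  fun n j => Int.fract (((n.1 / p : ℕ) : ℝ) ^ j.1 * ((n.1 % p : ℕ) : ℝ) / p)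

/-!
A lattice-valued point set is compared with the volume of a box by expanding the indicator of the
box into characters of `ZMod p`. Every discrepancy is thus at most the largest normalized
exponential sum at a nonzero frequency, times the `ℓ¹`-norm `≤ (2 + log p) ^ |u|` of the Fourier
coefficients, plus the cost `|u| / p` of rounding the corner of the box to the lattice.

For the Hua–Wang points, summing over `k` first shows that the exponential sum at frequency `h` is
`p` times the number of roots of `∑ h_j X^(j-1)`, hence at most `p (max u - 1)`. The factor `max u`
is paid for by the weight of the largest coordinate since `j γ_j` is bounded, and the remaining
factor `∏ γ_j (2 + log p)` is `O(p ^ ε)` because the weights are summable.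
-/

/-! ### Fourier coefficients of initial segments of `ZMod N` -/

section InitialSegment

open ZMod

variable {N : ℕ} [NeZero N]

lemma two_mul_mul_one_sub_le_sin_pi_mul {t : ℝ} (h0 : 0 ≤ t) (h1 : t ≤ 1) :
    2 * (t * (1 - t)) ≤ Real.sin (Real.pi * t) := by
  wlog ht : t ≤ 1 / 2 generalizing t
  · have := this (t := 1 - t) (by linarith) (by linarith) (by linarith)
    rwa [mul_one_sub Real.pi, Real.sin_pi_sub, sub_sub_cancel, mul_comm (1 - t)] at this
  have hpi := Real.pi_pos
  calc 2 * (t * (1 - t)) ≤ 2 * t := by nlinarith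
    _ = 2 / Real.pi * (Real.pi * t) := by field_simp
    _ ≤ Real.sin (Real.pi * t) := Real.mul_le_sin (by positivity) (by nlinarith)

lemma norm_stdAddChar_intCast_sub_one (j : ℤ) :
    ‖stdAddChar (j : ZMod N) - 1‖ = 2 * |Real.sin (Real.pi * (j / N))| := by
  have harg : 2 * Real.pi * Complex.I * j / N =
      Complex.I * ((2 * (Real.pi * (j / N)) : ℝ) : ℂ) := by
    push_cast
    ring
  rw [stdAddChar_coe, harg, Complex.norm_exp_I_mul_ofReal_sub_one, norm_mul, Real.norm_eq_abs,
    Real.norm_eq_abs, abs_two, mul_div_cancel_left₀ _ two_ne_zero]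

lemma four_mul_le_norm_stdAddChar_neg_sub_one (k : ZMod N) :
    4 * (k.val / N * (1 - k.val / N)) ≤ ‖stdAddChar (-k) - 1‖ := by
  have hk : -k = ((-(k.val : ℤ) : ℤ) : ZMod N) := by simp
  have hle : (k.val : ℝ) / N ≤ 1 :=
    div_le_one_of_le₀ (by exact_mod_cast k.val_lt.le) N.cast_nonneg
  have hsin := two_mul_mul_one_sub_le_sin_pi_mul (by positivity) hle
  rw [hk, norm_stdAddChar_intCast_sub_one]
  push_cast
  rw [neg_div, mul_neg, Real.sin_neg, abs_neg]
  linarith [le_abs_self (Real.sin (Real.pi * (k.val / N)))]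

/-- The indicator function of the initial segment `{0, …, m - 1}` of `ZMod N`, whose discrete
Fourier transform drives the counting of lattice points in boxes anchored at the origin. -/
noncomputable def initialIndicator (N m : ℕ) : ZMod N → ℂ :=
  fun b => if b.val < m then 1 else 0

variable {m : ℕ}

lemma dft_initialIndicator (hm : m ≤ N) (k : ZMod N) :
    𝓕 (initialIndicator N m) k = ∑ d ∈ range m, stdAddChar (-k) ^ d := by
  simp only [dft_apply, initialIndicator, smul_eq_mul, mul_ite, mul_one, mul_zero,
    ← sum_filter]
  refine sum_nbij' ZMod.val (fun d => (d : ZMod N)) (by simp) ?_ (by simp) ?_ fun j _ => ?_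
  · intro d hd
    have hdm := mem_range.1 hd
    simpa [ZMod.val_cast_of_lt (hdm.trans_le hm)] using hdm
  · intro d hd
    exact ZMod.val_cast_of_lt ((mem_range.1 hd).trans_le hm)
  · rw [← AddChar.map_nsmul_eq_pow, nsmul_eq_mul, natCast_zmod_val, mul_neg]

lemma dft_initialIndicator_zero (hm : m ≤ N) : 𝓕 (initialIndicator N m) 0 = m := by
  simp [dft_initialIndicator hm]

lemma norm_dft_initialIndicator_le (hm : m ≤ N) {k : ZMod N} (hk : k ≠ 0) :
    ‖𝓕 (initialIndicator N m) k‖ ≤ N * ((k.val : ℝ)⁻¹ + ((-k).val : ℝ)⁻¹) / 2 := by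
  have hv : (0 : ℝ) < k.val := by exact_mod_cast ZMod.val_pos.2 hk
  have hvN : (k.val : ℝ) < N := by exact_mod_cast k.val_lt
  have hN : (0 : ℝ) < N := hv.trans hvN
  have hneg : ((-k).val : ℝ) = N - k.val := by
    have : NeZero k := ⟨hk⟩
    rw [ZMod.val_neg_of_ne_zero, Nat.cast_sub k.val_lt.le]
  have hlow_pos : 0 < 4 * ((k.val : ℝ) / N * (1 - k.val / N)) := by
    have : (k.val : ℝ) / N < 1 := (div_lt_one hN).2 hvN
    have : 0 < 1 - (k.val : ℝ) / N := by linarith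
    positivity
  have hlow := four_mul_le_norm_stdAddChar_neg_sub_one k
  have hne : stdAddChar (-k) ≠ 1 := sub_ne_zero.1 (norm_pos_iff.1 (hlow_pos.trans_le hlow))
  have hnum : ‖stdAddChar (-k) ^ m - 1‖ ≤ 2 := by
    refine (norm_sub_le _ _).trans_eq ?_
    rw [norm_pow, AddChar.norm_apply, one_pow, norm_one, one_add_one_eq_two]
  rw [dft_initialIndicator hm, geom_sum_eq hne, norm_div, hneg]
  calc ‖stdAddChar (-k) ^ m - 1‖ / ‖stdAddChar (-k) - 1‖
      ≤ 2 / (4 * (k.val / N * (1 - k.val / N))) := by gcongr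
    _ = N * ((k.val : ℝ)⁻¹ + ((N : ℝ) - k.val)⁻¹) / 2 := by
        have : (N : ℝ) - k.val ≠ 0 := (sub_pos.2 hvN).ne'
        field_simp
        ring

lemma sum_inv_val_le : ∑ k : ZMod N, (k.val : ℝ)⁻¹ ≤ 1 + Real.log N := by
  obtain ⟨q, rfl⟩ := Nat.exists_eq_succ_of_ne_zero (NeZero.ne N)
  calc ∑ k : ZMod (q + 1), (k.val : ℝ)⁻¹ = ∑ v ∈ range (q + 1), (v : ℝ)⁻¹ :=
        Fin.sum_univ_eq_sum_range (fun v => (v : ℝ)⁻¹) (q + 1)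
    _ = (harmonic q : ℝ) := by simp [sum_range_succ', harmonic]
    _ ≤ (harmonic (q + 1) : ℝ) := by
        rw [harmonic_succ, Rat.cast_add]
        exact le_add_of_nonneg_right (by positivity)
    _ ≤ 1 + Real.log (q + 1 : ℕ) := harmonic_le_one_add_log (q + 1)

lemma sum_norm_dft_initialIndicator_le (hm : m ≤ N) :
    ∑ k, ‖𝓕 (initialIndicator N m) k‖ ≤ N * (2 + Real.log N) := by
  have hterm (k : ZMod N) : ‖𝓕 (initialIndicator N m) k‖ ≤
      (if k = 0 then (N : ℝ) else 0) + N * ((k.val : ℝ)⁻¹ + ((-k).val : ℝ)⁻¹) / 2 := by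
    split_ifs with hk
    · subst hk
      simpa [dft_initialIndicator_zero hm] using hm
    · simpa only [zero_add] using norm_dft_initialIndicator_le hm hk
  have hneg : ∑ k : ZMod N, ((-k).val : ℝ)⁻¹ = ∑ k : ZMod N, (k.val : ℝ)⁻¹ :=
    Equiv.sum_comp (Equiv.neg (ZMod N)) fun k => (k.val : ℝ)⁻¹
  calc ∑ k, ‖𝓕 (initialIndicator N m) k‖
      ≤ N + N * (∑ k : ZMod N, (k.val : ℝ)⁻¹ + ∑ k : ZMod N, ((-k).val : ℝ)⁻¹) / 2 := by
        refine (sum_le_sum fun k _ => hterm k).trans_eq ?_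
        rw [sum_add_distrib, sum_ite_eq' univ 0, if_pos (mem_univ _), ← sum_div, ← mul_sum,
          sum_add_distrib]
    _ = N * (1 + ∑ k : ZMod N, (k.val : ℝ)⁻¹) := by rw [hneg]; ring
    _ ≤ N * (2 + Real.log N) :=
        mul_le_mul_of_nonneg_left (by linarith [sum_inv_val_le (N := N)]) N.cast_nonneg

end InitialSegment

/-! ### Discrepancy of lattice-valued point sets -/

section Lattice

open ZMod

lemma addChar_map_sum {A R ι : Type*} [AddCommMonoid A] [CommMonoid R] (ψ : AddChar A R)
    (u : Finset ι) (f : ι → A) : ψ (∑ i ∈ u, f i) = ∏ i ∈ u, ψ (f i) :=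
  map_prod ψ.toMonoidHom (fun i => Multiplicative.ofAdd (f i)) u

variable {N : ℕ} [NeZero N]

lemma initialIndicator_eq_sum_dft (m : ℕ) (b : ZMod N) :
    initialIndicator N m b =
      ∑ h, 𝓕 (initialIndicator N m) h / N * stdAddChar (h * b) := by
  conv_lhs => rw [← dft.symm_apply_apply (initialIndicator N m), invDFT_apply, smul_eq_mul, mul_sum]
  refine sum_congr rfl fun h _ => ?_
  rw [smul_eq_mul]
  ring

section Box

variable {α ι : Type*} [Fintype α] [Fintype ι] (y : α → ι → ZMod N) {m : ι → ℕ}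

/-- The normalized Fourier coefficient at frequency `h` of the indicator function of the box
`{b : ι → ZMod N | ∀ i, b i < m i}`; it factors over the coordinates. -/
noncomputable def boxCoeff (m : ι → ℕ) (h : ι → ZMod N) : ℂ :=
  ∏ i, 𝓕 (initialIndicator N (m i)) (h i) / N

lemma boxCoeff_zero (hm : ∀ i, m i ≤ N) : boxCoeff m (0 : ι → ZMod N) = ∏ i, (m i : ℂ) / N := by
  simp only [boxCoeff, Pi.zero_apply, dft_initialIndicator_zero (hm _)]

lemma sum_norm_boxCoeff_le [DecidableEq ι] (hm : ∀ i, m i ≤ N) :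
    ∑ h : ι → ZMod N, ‖boxCoeff m h‖ ≤ (2 + Real.log N) ^ Fintype.card ι := by
  have hN : (0 : ℝ) < N := by exact_mod_cast Nat.pos_of_neZero N
  calc ∑ h : ι → ZMod N, ‖boxCoeff m h‖
      = ∏ i, (∑ k, ‖𝓕 (initialIndicator N (m i)) k‖) / N := by
        simp only [boxCoeff, norm_prod, norm_div, Complex.norm_natCast, sum_div, Fintype.prod_sum]
    _ ≤ ∏ _i : ι, (2 + Real.log N) := by
        gcongr with i
        rw [div_le_iff₀' hN]
        exact sum_norm_dft_initialIndicator_le (hm i)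
    _ = (2 + Real.log N) ^ Fintype.card ι := by rw [prod_const, card_univ]

lemma card_box_eq_sum_boxCoeff [DecidableEq ι] (m : ι → ℕ) :
    (#{a | ∀ i, (y a i).val < m i} : ℂ) =
      ∑ h : ι → ZMod N, boxCoeff m h * ∑ a, stdAddChar (h ⬝ᵥ y a) := by
  have hpoint (a : α) : (if ∀ i, (y a i).val < m i then (1 : ℂ) else 0) =
      ∑ h : ι → ZMod N, boxCoeff m h * stdAddChar (h ⬝ᵥ y a) := by
    calc (if ∀ i, (y a i).val < m i then (1 : ℂ) else 0)
        = ∏ i, initialIndicator N (m i) (y a i) := by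
          simp only [initialIndicator, Fintype.prod_ite_zero, prod_const_one]
      _ = ∑ h : ι → ZMod N, boxCoeff m h * stdAddChar (h ⬝ᵥ y a) := by
          simp only [initialIndicator_eq_sum_dft, Fintype.prod_sum, prod_mul_distrib, boxCoeff,
            dotProduct, addChar_map_sum]
  rw [natCast_card_filter]
  simp only [hpoint, mul_sum]
  exact sum_comm

lemma card_box_div_sub_prod_eq_sum_boxCoeff [DecidableEq ι] [Nonempty α] (hm : ∀ i, m i ≤ N) :
    (#{a | ∀ i, (y a i).val < m i} : ℂ) / Fintype.card α - ∏ i, (m i : ℂ) / N =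
      ∑ h ∈ univ.erase (0 : ι → ZMod N),
        boxCoeff m h * (∑ a, stdAddChar (h ⬝ᵥ y a)) / Fintype.card α := by
  have hα : (Fintype.card α : ℂ) ≠ 0 := Nat.cast_ne_zero.2 Fintype.card_ne_zero
  have hmain : boxCoeff m (0 : ι → ZMod N) * (∑ a, stdAddChar (0 ⬝ᵥ y a)) / Fintype.card α =
      ∏ i, (m i : ℂ) / N := by
    simp only [boxCoeff_zero hm, zero_dotProduct, AddChar.map_zero_eq_one, sum_const, card_univ,
      nsmul_eq_mul, mul_one]
    exact mul_div_cancel_right₀ _ hα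
  rw [card_box_eq_sum_boxCoeff, ← hmain, ← add_sum_erase univ _ (mem_univ 0), add_div,
    add_sub_cancel_left, sum_div]

lemma abs_card_box_div_sub_prod_le [Nonempty α] (hm : ∀ i, m i ≤ N) {B : ℝ} (hB0 : 0 ≤ B)
    (hB : ∀ h : ι → ZMod N, h ≠ 0 →
      ‖∑ a, stdAddChar (h ⬝ᵥ y a)‖ ≤ B * Fintype.card α) :
    |(#{a | ∀ i, (y a i).val < m i} : ℝ) / Fintype.card α - ∏ i, (m i : ℝ) / N| ≤
      B * (2 + Real.log N) ^ Fintype.card ι := by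
  classical
  have hα : (0 : ℝ) < Fintype.card α := by exact_mod_cast Fintype.card_pos
  calc |(#{a | ∀ i, (y a i).val < m i} : ℝ) / Fintype.card α - ∏ i, (m i : ℝ) / N|
      = ‖∑ h ∈ univ.erase (0 : ι → ZMod N),
          boxCoeff m h * (∑ a, stdAddChar (h ⬝ᵥ y a)) / Fintype.card α‖ := by
        rw [← card_box_div_sub_prod_eq_sum_boxCoeff y hm, ← Real.norm_eq_abs, ← Complex.norm_real]
        push_cast
        rfl
    _ ≤ ∑ h ∈ univ.erase (0 : ι → ZMod N), ‖boxCoeff m h‖ * B := by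
        refine norm_sum_le_of_le _ fun h hh => ?_
        rw [norm_div, norm_mul, Complex.norm_natCast, mul_div_assoc]
        gcongr
        exact (div_le_iff₀ hα).2 (hB h (ne_of_mem_erase hh))
    _ ≤ ∑ h : ι → ZMod N, ‖boxCoeff m h‖ * B :=
        sum_le_sum_of_subset_of_nonneg (erase_subset _ _) fun h _ _ => by positivity
    _ = B * ∑ h : ι → ZMod N, ‖boxCoeff m h‖ := by rw [← sum_mul, mul_comm]
    _ ≤ B * (2 + Real.log N) ^ Fintype.card ι :=
        mul_le_mul_of_nonneg_left (sum_norm_boxCoeff_le hm) hB0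

end Box

lemma norm_prod_sub_prod_le {ι R : Type*} [NormedCommRing R] [NormOneClass R]
    (u : Finset ι) {a b : ι → R} {c : ℝ} (ha : ∀ i ∈ u, ‖a i‖ ≤ 1) (hb : ∀ i ∈ u, ‖b i‖ ≤ 1)
    (hab : ∀ i ∈ u, ‖a i - b i‖ ≤ c) : ‖∏ i ∈ u, a i - ∏ i ∈ u, b i‖ ≤ #u * c := by
  classical
  induction u using Finset.induction_on with
  | empty => simp
  | insert i u hi ih =>
    simp only [forall_mem_insert] at ha hb hab
    have hprod : ‖∏ j ∈ u, b j‖ ≤ 1 :=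
      (norm_prod_le u b).trans (prod_le_one (fun _ _ => norm_nonneg _) hb.2)
    have hc : 0 ≤ c := (norm_nonneg _).trans hab.1
    rw [prod_insert hi, prod_insert hi, card_insert_of_notMem hi]
    calc ‖a i * ∏ j ∈ u, a j - b i * ∏ j ∈ u, b j‖
        = ‖a i * (∏ j ∈ u, a j - ∏ j ∈ u, b j) + (a i - b i) * ∏ j ∈ u, b j‖ := by
          congr 1
          ring
      _ ≤ ‖a i‖ * ‖∏ j ∈ u, a j - ∏ j ∈ u, b j‖ + ‖a i - b i‖ * ‖∏ j ∈ u, b j‖ :=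
          (norm_add_le _ _).trans (add_le_add (norm_mul_le _ _) (norm_mul_le _ _))
      _ ≤ 1 * (#u * c) + c * 1 := by
          gcongr
          exacts [ha.1, ih ha.2 hb.2 hab.2, hab.1]
      _ = (#u + 1 : ℕ) * c := by
          push_cast
          ring

lemma abs_ceil_mul_div_sub_le {n t : ℝ} (hn : 0 < n) (ht : 0 ≤ t) :
    |(⌈n * t⌉₊ : ℝ) / n - t| ≤ 1 / n := by
  have hlow : n * t ≤ ⌈n * t⌉₊ := Nat.le_ceil _
  have hup : (⌈n * t⌉₊ : ℝ) < n * t + 1 := Nat.ceil_lt_add_one (by positivity)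
  rw [div_sub' hn.ne', abs_of_nonneg (div_nonneg (by linarith) hn.le)]
  gcongr
  linarith

lemma forall_val_div_lt_projPoint_iff {s : ℕ} (b : Fin s → ZMod N) (u : Finset (Fin s))
    (z : Fin s → ℝ) :
    (∀ j, ((b j).val : ℝ) / N < projPoint u z j) ↔ ∀ i : u, (b i).val < ⌈N * z i⌉₊ := by
  have hN : (0 : ℝ) < N := by exact_mod_cast Nat.pos_of_neZero N
  have hcoord (j : Fin s) : ((b j).val : ℝ) / N < projPoint u z j ↔
      (j ∈ u → (b j).val < ⌈N * z j⌉₊) := by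
    by_cases hj : j ∈ u
    · simp only [projPoint, hj, if_true, true_imp_iff, div_lt_iff₀' hN, Nat.lt_ceil]
    · simpa only [projPoint, hj, if_false, false_imp_iff, iff_true, div_lt_one hN, Nat.cast_lt]
        using (b j).val_lt
  simp only [hcoord, Subtype.forall]

lemma abs_localDisc_projPoint_le {M s : ℕ} [NeZero M] (y : Fin M → Fin s → ZMod N)
    (u : Finset (Fin s)) {z : Fin s → ℝ} (hz : ∀ j, z j ∈ Set.Icc (0 : ℝ) 1) {B : ℝ} (hB0 : 0 ≤ B)
    (hB : ∀ h : u → ZMod N, h ≠ 0 → ‖∑ n, stdAddChar (h ⬝ᵥ fun i : u => y n i)‖ ≤ B * M) :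
    |localDisc (fun n j => ((y n j).val : ℝ) / N) (projPoint u z)| ≤
      B * (2 + Real.log N) ^ #u + #u * (1 / N) := by
  have hN : (0 : ℝ) < N := by exact_mod_cast Nat.pos_of_neZero N
  have hceil (j : Fin s) : ⌈N * z j⌉₊ ≤ N :=
    Nat.ceil_le.2 (mul_le_of_le_one_right hN.le (hz j).2)
  have hcount := abs_card_box_div_sub_prod_le (fun n (i : u) => y n i)
    (fun i => hceil i) hB0 (by simpa only [Fintype.card_fin] using hB)
  rw [Fintype.card_fin, Fintype.card_coe, prod_coe_sort u fun j => (⌈N * z j⌉₊ : ℝ) / N]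
    at hcount
  have hround : |∏ j ∈ u, (⌈N * z j⌉₊ : ℝ) / N - ∏ j ∈ u, z j| ≤ #u * (1 / N) := by
    refine norm_prod_sub_prod_le (R := ℝ) u (fun j _ => ?_) (fun j _ => ?_)
      fun j _ => abs_ceil_mul_div_sub_le hN (hz j).1
    · rw [Real.norm_of_nonneg (by positivity)]
      exact div_le_one_of_le₀ (by exact_mod_cast hceil j) hN.le
    · rw [Real.norm_of_nonneg (hz j).1]
      exact (hz j).2
  have hvol : ∏ j, projPoint u z j = ∏ j ∈ u, z j := by
    simp only [projPoint, prod_ite_mem, univ_inter]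
  simp only [localDisc, forall_val_div_lt_projPoint_iff, hvol]
  exact (abs_sub_le _ _ _).trans (add_le_add hcount hround)

end Lattice

/-! ### Exponential sums over the Hua–Wang points -/

section HuaWangPoints

/-- The numerators modulo `p` of the points of `huaWangR p s`, as elements of `ZMod p`; the index
`n < p ^ 2` encodes `a = n / p` and `k = n % p` as there. -/
def huaWangResidue (p s : ℕ) (n : Fin (p ^ 2)) (j : Fin s) : ZMod p :=
  ((n.1 / p : ℕ) : ZMod p) ^ j.1 * ((n.1 % p : ℕ) : ZMod p)

lemma huaWangR_eq (p s : ℕ) [NeZero p] :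
    huaWangR p s = fun n j => ((huaWangResidue p s n j).val : ℝ) / p := by
  funext n j
  have hcast : huaWangResidue p s n j = (((n.1 / p) ^ j.1 * (n.1 % p) : ℕ) : ZMod p) := by
    simp only [huaWangResidue, Nat.cast_mul, Nat.cast_pow]
  rw [hcast, ZMod.val_natCast, ← Int.fract_div_natCast_eq_div_natCast_mod]
  simp only [huaWangR, Nat.cast_mul, Nat.cast_pow]

lemma sum_fin_sq_eq_sum_zmod {E : Type*} [AddCommMonoid E] (p : ℕ) [NeZero p]
    (f : ZMod p → ZMod p → E) :
    ∑ n : Fin (p ^ 2), f ((n.1 / p : ℕ) : ZMod p) ((n.1 % p : ℕ) : ZMod p) =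
      ∑ a, ∑ k, f a k := by
  have hp : 0 < p := Nat.pos_of_neZero p
  have hdiv (n : Fin (p ^ 2)) : n.1 / p < p := Nat.div_lt_of_lt_mul (by rw [← sq]; exact n.2)
  rw [← Fintype.sum_prod_type']
  refine Function.Bijective.sum_comp (g := fun x : ZMod p × ZMod p => f x.1 x.2)
    (e := fun n : Fin (p ^ 2) => (((n.1 / p : ℕ) : ZMod p), ((n.1 % p : ℕ) : ZMod p)))
    ((Fintype.bijective_iff_injective_and_card _).2 ⟨fun n n' hnn' => ?_, by simp [ZMod.card, sq]⟩)
  obtain ⟨hd, hm⟩ := Prod.mk.inj hnn'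
  have hd := congrArg ZMod.val hd
  have hm := congrArg ZMod.val hm
  rw [ZMod.val_cast_of_lt (hdiv n), ZMod.val_cast_of_lt (hdiv n')] at hd
  rw [ZMod.val_cast_of_lt (Nat.mod_lt _ hp), ZMod.val_cast_of_lt (Nat.mod_lt _ hp)] at hm
  exact Fin.ext (by rw [← Nat.div_add_mod n.1 p, ← Nat.div_add_mod n'.1 p, hd, hm])

lemma card_sum_mul_pow_eq_zero_le {R ι : Type*} [CommRing R] [IsDomain R] [Fintype R]
    [DecidableEq R] [Fintype ι] {e : ι → ℕ} (he : Function.Injective e) {d : ℕ}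
    (hd : ∀ i, e i ≤ d) {h : ι → R} (hh : h ≠ 0) :
    #{a : R | ∑ i, h i * a ^ e i = 0} ≤ d := by
  classical
  set Q : Polynomial R := ∑ i, Polynomial.monomial (e i) (h i) with hQ
  have hcoeff (i : ι) : Q.coeff (e i) = h i := by
    simp only [hQ, Polynomial.finsetSum_coeff, Polynomial.coeff_monomial, he.eq_iff,
      sum_ite_eq', mem_univ, if_true]
  have hQ0 : Q ≠ 0 := fun hQ0 => hh (funext fun i => by rw [← hcoeff i, hQ0]; rfl)
  have hdeg : Q.natDegree ≤ d := Polynomial.natDegree_sum_le_of_forall_le _ _ fun i _ =>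
    (Polynomial.natDegree_monomial_le _).trans (hd i)
  refine (Polynomial.card_le_degree_of_subset_roots fun a ha => ?_).trans hdeg
  rw [Polynomial.mem_roots hQ0, Polynomial.IsRoot]
  simpa [hQ, Polynomial.eval_finsetSum] using ha

variable {p s : ℕ} [Fact p.Prime]

lemma sum_stdAddChar_huaWangResidue (u : Finset (Fin s)) (h : u → ZMod p) :
    ∑ n, ZMod.stdAddChar (h ⬝ᵥ fun i : u => huaWangResidue p s n i) =
      (p * #{a : ZMod p | ∑ i, h i * a ^ i.1.1 = 0} : ℂ) := by
  have hdot (a k : ZMod p) : (h ⬝ᵥ fun i : u => a ^ i.1.1 * k) = k * ∑ i, h i * a ^ i.1.1 := by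
    rw [dotProduct, mul_sum]
    exact sum_congr rfl fun i _ => by ring
  have hinner (a : ZMod p) : ∑ k, ZMod.stdAddChar (k * ∑ i, h i * a ^ i.1.1) =
      if ∑ i, h i * a ^ i.1.1 = 0 then (p : ℂ) else 0 := by
    rw [AddChar.sum_mulShift _ (ZMod.isPrimitive_stdAddChar p), ZMod.card, Nat.cast_ite,
      Nat.cast_zero]
  simp only [huaWangResidue]
  rw [sum_fin_sq_eq_sum_zmod p fun a k => ZMod.stdAddChar (h ⬝ᵥ fun i : u => a ^ i.1.1 * k)]
  simp only [hdot, hinner]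
  rw [← sum_filter, sum_const, nsmul_eq_mul, mul_comm]

lemma abs_localDisc_huaWangR_le (u : Finset (Fin s)) {d : ℕ} (hd : ∀ j ∈ u, j.1 ≤ d)
    {z : Fin s → ℝ} (hz : ∀ j, z j ∈ Set.Icc (0 : ℝ) 1) :
    |localDisc (huaWangR p s) (projPoint u z)| ≤
      d / p * (2 + Real.log p) ^ #u + #u * (1 / p) := by
  have hp : (p : ℝ) ≠ 0 := NeZero.ne _
  rw [huaWangR_eq]
  refine abs_localDisc_projPoint_le _ u hz (by positivity) fun h hh => ?_
  have hroots : (#{a : ZMod p | ∑ i, h i * a ^ i.1.1 = 0} : ℝ) ≤ d := by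
    exact_mod_cast card_sum_mul_pow_eq_zero_le
      (Fin.val_injective.comp Subtype.val_injective) (fun i => hd i i.2) hh
  rw [sum_stdAddChar_huaWangResidue, norm_mul, Complex.norm_natCast, Complex.norm_natCast]
  calc (p : ℝ) * #{a : ZMod p | ∑ i, h i * a ^ i.1.1 = 0} ≤ p * d := by gcongr
    _ = d / p * (p ^ 2 : ℕ) := by
        push_cast
        field_simp

end HuaWangPoints

/-! ### Products of summable weights -/

section Weights

lemma one_add_mul_le_mul_exp {a y η : ℝ} (ha : 0 ≤ a) (hy : 0 ≤ y) (hη : 0 < η) :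
    1 + a * y ≤ (1 + a / η) * Real.exp (η * y) := by
  calc 1 + a * y ≤ 1 + a * y + (a / η + η * y) := le_add_of_nonneg_right (by positivity)
    _ = (1 + a / η) * (η * y + 1) := by
        field_simp
        ring
    _ ≤ (1 + a / η) * Real.exp (η * y) := by
        gcongr
        exact Real.add_one_le_exp _

lemma prod_one_add_mul_le_prod_mul_exp {ι : Type*} {g : ι → ℝ} (hg : ∀ j, 0 ≤ g j)
    (T : Finset ι) {y η : ℝ} (hy : 0 ≤ y) (hη : 0 < η) :
    ∏ j ∈ T, (1 + g j * y) ≤ (∏ j ∈ T, (1 + g j / η)) * Real.exp (#T * η * y) := by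
  calc ∏ j ∈ T, (1 + g j * y) ≤ ∏ j ∈ T, ((1 + g j / η) * Real.exp (η * y)) :=
        prod_le_prod (fun j _ => add_nonneg zero_le_one (mul_nonneg (hg j) hy))
          fun j _ => one_add_mul_le_mul_exp (hg j) hy hη
    _ = (∏ j ∈ T, (1 + g j / η)) * Real.exp (#T * η * y) := by
        rw [prod_mul_distrib, prod_const, ← Real.exp_nat_mul, mul_assoc]

-- Split off a finite set `T` carrying all but `ε / 2` of the sum: the factors outside `T` cost
-- `exp (ε / 2 * y)` by `1 + x ≤ exp x`, those inside `T` cost a constant times `exp (ε / 2 * y)`.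
lemma exists_prod_one_add_mul_le_exp {ι : Type*} {g : ι → ℝ} (hg : ∀ j, 0 ≤ g j)
    (hsum : Summable g) {ε : ℝ} (hε : 0 < ε) :
    ∃ C : ℝ, 0 < C ∧ ∀ (S : Finset ι) (y : ℝ), 0 ≤ y →
      ∏ j ∈ S, (1 + g j * y) ≤ C * Real.exp (ε * y) := by
  classical
  obtain ⟨T, hT⟩ := summable_iff_vanishing_norm.1 hsum (ε / 2) (half_pos hε)
  set η := ε / (2 * (#T + 1)) with hη
  have hη0 : 0 < η := by positivity
  have hηT : #T * η ≤ ε / 2 := by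
    rw [hη, mul_div_assoc', div_le_div_iff₀ (by positivity) two_pos]
    nlinarith
  set C := ∏ j ∈ T, (1 + g j / η)
  have hC : 0 < C := prod_pos fun j _ => add_pos_of_pos_of_nonneg one_pos (div_nonneg (hg j) hη0.le)
  refine ⟨C, hC, fun S y hy => ?_⟩
  have hone (j : ι) : 1 ≤ 1 + g j * y := le_add_of_nonneg_right (mul_nonneg (hg j) hy)
  have hhead : ∏ j ∈ T, (1 + g j * y) ≤ C * Real.exp (ε / 2 * y) :=
    (prod_one_add_mul_le_prod_mul_exp hg T hy hη0).trans (by gcongr)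
  have htail : ∏ j ∈ (T ∪ S) \ T, (1 + g j * y) ≤ Real.exp (ε / 2 * y) := by
    refine (Real.prod_one_add_le_exp_sum _ fun j => mul_nonneg (hg j) hy).trans ?_
    rw [← sum_mul]
    gcongr
    exact (le_abs_self _).trans (hT _ sdiff_disjoint).le
  calc ∏ j ∈ S, (1 + g j * y) ≤ ∏ j ∈ T ∪ S, (1 + g j * y) :=
        prod_mono_set_of_one_le hone subset_union_right
    _ = (∏ j ∈ T, (1 + g j * y)) * ∏ j ∈ (T ∪ S) \ T, (1 + g j * y) := by
        rw [mul_comm, prod_sdiff subset_union_left]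
    _ ≤ C * Real.exp (ε / 2 * y) * Real.exp (ε / 2 * y) :=
        mul_le_mul hhead htail (prod_nonneg fun j _ => zero_le_one.trans (hone j)) (by positivity)
    _ = C * Real.exp (ε * y) := by rw [mul_assoc, ← Real.exp_add, ← add_mul, add_halves]

lemma le_inv_mul_exp {c : ℝ} (hc : 0 < c) (x : ℝ) : x ≤ c⁻¹ * Real.exp (c * x) := by
  rw [le_inv_mul_iff₀ hc]
  linarith [Real.add_one_le_exp (c * x)]

lemma bddAbove_range_succ_mul_of_antitone {g : ℕ → ℝ} (hg : ∀ j, 0 ≤ g j) (hanti : Antitone g)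
    (hsum : Summable g) : BddAbove (Set.range fun j : ℕ => ((j : ℝ) + 1) * g j) := by
  refine ⟨∑' i, g i, Set.forall_mem_range.2 fun j => ?_⟩
  calc ((j : ℝ) + 1) * g j = ∑ _i ∈ range (j + 1), g j := by simp
    _ ≤ ∑ i ∈ range (j + 1), g i :=
        sum_le_sum fun i hi => hanti (Nat.lt_succ_iff.1 (mem_range.1 hi))
    _ ≤ ∑' i, g i := hsum.sum_le_tsum _ fun i _ => hg i

lemma weightOf_mul_pow_card {s : ℕ} (γ : ℕ → ℝ) {u : Finset (Fin s)} {i : Fin s} (hi : i ∈ u)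
    (L : ℝ) :
    weightOf γ u * L ^ #u = γ (i.1 + 1) * L * ∏ j ∈ u.erase i, (γ (j.1 + 1) * L) := by
  rw [mul_prod_erase u (fun j => γ (j.1 + 1) * L) hi, prod_mul_distrib, prod_const, weightOf]

lemma exists_weightOf_mul_pow_le_exp {γ : ℕ → ℝ} (hγ : ∀ j, 1 ≤ j → 0 ≤ γ j)
    (hsum : Summable fun j => γ (j + 1))
    (hbdd : BddAbove (Set.range fun j : ℕ => ((j : ℝ) + 1) * γ (j + 1))) {ε : ℝ} (hε : 0 < ε) :
    ∃ C : ℝ, 0 < C ∧ ∀ {s : ℕ} (u : Finset (Fin s)), ∀ i ∈ u, ∀ L : ℝ, 0 ≤ L →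
      weightOf γ u * ((i.1 + 1) * L ^ #u) ≤ C * Real.exp (ε * L) := by
  have hg (j : ℕ) : 0 ≤ γ (j + 1) := hγ (j + 1) (by omega)
  obtain ⟨B, hB⟩ := hbdd
  replace hB (j : ℕ) : ((j : ℝ) + 1) * γ (j + 1) ≤ max B 1 :=
    (hB (Set.mem_range_self j)).trans (le_max_left B 1)
  obtain ⟨C, hC, hprod⟩ := exists_prod_one_add_mul_le_exp hg hsum (half_pos hε)
  refine ⟨max B 1 * (ε / 2)⁻¹ * C, by positivity, fun {s} u i hi L hL => ?_⟩
  have hrest : ∏ j ∈ u.erase i, (γ (j.1 + 1) * L) ≤ C * Real.exp (ε / 2 * L) := by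
    calc ∏ j ∈ u.erase i, (γ (j.1 + 1) * L) ≤ ∏ j ∈ u.erase i, (1 + γ (j.1 + 1) * L) :=
          prod_le_prod (fun j _ => mul_nonneg (hg j) hL)
            fun j _ => le_add_of_nonneg_left zero_le_one
      _ = ∏ j ∈ (u.erase i).map Fin.valEmbedding, (1 + γ (j + 1) * L) := by
          rw [prod_map]
          rfl
      _ ≤ C * Real.exp (ε / 2 * L) := hprod _ L hL
  calc weightOf γ u * ((i.1 + 1) * L ^ #u)
      = ((i.1 : ℝ) + 1) * γ (i.1 + 1) * L * ∏ j ∈ u.erase i, (γ (j.1 + 1) * L) := by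
        rw [mul_left_comm, weightOf_mul_pow_card γ hi]
        ring
    _ ≤ max B 1 * ((ε / 2)⁻¹ * Real.exp (ε / 2 * L)) * (C * Real.exp (ε / 2 * L)) := by
        gcongr
        · exact prod_nonneg fun j _ => mul_nonneg (hg j) hL
        · exact hB i
        · exact le_inv_mul_exp (half_pos hε) L
    _ = max B 1 * (ε / 2)⁻¹ * C * (Real.exp (ε / 2 * L) * Real.exp (ε / 2 * L)) := by ring
    _ = max B 1 * (ε / 2)⁻¹ * C * Real.exp (ε * L) := by
        rw [← Real.exp_add, ← add_mul, add_halves]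

end Weights

/-! ### The weighted star-discrepancy of the Hua–Wang points -/

lemma card_le_of_forall_val_le {s : ℕ} {u : Finset (Fin s)} {d : ℕ} (hd : ∀ j ∈ u, j.1 ≤ d) :
    #u ≤ d + 1 := by
  rw [← card_range (d + 1)]
  exact card_le_card_of_injOn Fin.val (fun j hj => by simpa [Nat.lt_succ_iff] using hd j hj)
    Fin.val_injective.injOn

lemma abs_localDisc_huaWangR_max'_le {p s : ℕ} [Fact p.Prime] {u : Finset (Fin s)}
    (hu : u.Nonempty) {z : Fin s → ℝ} (hz : ∀ j, z j ∈ Set.Icc (0 : ℝ) 1) :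
    |localDisc (huaWangR p s) (projPoint u z)| ≤
      2 / p * (((u.max' hu).1 + 1) * (2 + Real.log p) ^ #u) := by
  have hmax : ∀ j ∈ u, j.1 ≤ (u.max' hu).1 := fun j hj => u.le_max' j hj
  set d : ℕ := (u.max' hu).1
  have hcard : (#u : ℝ) ≤ d + 1 := by exact_mod_cast card_le_of_forall_val_le hmax
  have hpow : 1 ≤ (2 + Real.log p) ^ #u :=
    one_le_pow₀ (by linarith [Real.log_natCast_nonneg p])
  calc |localDisc (huaWangR p s) (projPoint u z)|
      ≤ d / p * (2 + Real.log p) ^ #u + #u * (1 / p) := abs_localDisc_huaWangR_le u hmax hz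
    _ = (d * (2 + Real.log p) ^ #u + #u * 1) / p := by ring
    _ ≤ ((d + 1) * (2 + Real.log p) ^ #u + (d + 1) * (2 + Real.log p) ^ #u) / p := by
        gcongr
        linarith
    _ = 2 / p * ((d + 1) * (2 + Real.log p) ^ #u) := by ring

theorem wStarDisc_huaWangR_le_general (γ : ℕ → ℝ) (hγ : ∀ j, 1 ≤ j → 0 ≤ γ j)
    (hsum : Summable fun j => γ (j + 1))
    (hbdd : BddAbove (Set.range fun j : ℕ => ((j : ℝ) + 1) * γ (j + 1))) (δ : ℝ) (hδ : 0 < δ) :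
    ∃ C : ℝ, 0 < C ∧ ∀ p s : ℕ, p.Prime → 1 ≤ s →
      wStarDisc γ (huaWangR p s) ≤ C * (p : ℝ) ^ (-(1 - δ) : ℝ) := by
  obtain ⟨C, hC, hweight⟩ := exists_weightOf_mul_pow_le_exp hγ hsum hbdd hδ
  refine ⟨2 * C * Real.exp (2 * δ), by positivity, fun p s hp _ => ?_⟩
  have : Fact p.Prime := ⟨hp⟩
  have hp0 : (0 : ℝ) < p := by exact_mod_cast hp.pos
  refine Real.sSup_le ?_ (by positivity)
  rintro _ ⟨z, hz, u, hu, rfl⟩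
  set L : ℝ := 2 + Real.log p with hL
  have hL0 : 0 ≤ L := by linarith [Real.log_natCast_nonneg p]
  have hγu : 0 ≤ weightOf γ u := prod_nonneg fun j _ => hγ _ (by omega)
  calc weightOf γ u * |localDisc (huaWangR p s) (projPoint u z)|
      ≤ weightOf γ u * (2 / p * (((u.max' hu).1 + 1) * L ^ #u)) := by
        gcongr
        exact abs_localDisc_huaWangR_max'_le hu hz
    _ = 2 / p * (weightOf γ u * (((u.max' hu).1 + 1) * L ^ #u)) := mul_left_comm _ _ _
    _ ≤ 2 / p * (C * Real.exp (δ * L)) :=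
        mul_le_mul_of_nonneg_left (hweight u _ (u.max'_mem hu) L hL0) (by positivity)
    _ = 2 * C * Real.exp (2 * δ) * (p : ℝ) ^ (-(1 - δ)) := by
        rw [hL, mul_add, Real.exp_add, neg_sub, Real.rpow_sub hp0, Real.rpow_one,
          Real.rpow_def_of_pos hp0, mul_comm δ 2, mul_comm δ (Real.log p)]
        ring

/-- for non-increasing, summable, nonnegative weights and any `δ > 0`,
`D*_γ(R_{p²,s}) ≤ C p^{−(1−δ)}` with `C` independent of the prime `p` and of `s`. -/
theorem wStarDisc_huaWangR_le (γ : ℕ → ℝ) (hγ : ∀ j, 1 ≤ j → 0 ≤ γ j)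
    (hdec : ∀ j, 1 ≤ j → γ (j + 1) ≤ γ j)
    (hsum : Summable fun j => γ (j + 1)) (δ : ℝ) (hδ : 0 < δ) :
    ∃ C : ℝ, 0 < C ∧ ∀ p s : ℕ, p.Prime → 1 ≤ s →
      wStarDisc γ (huaWangR p s) ≤ C * (p : ℝ) ^ (-(1 - δ) : ℝ) := by
  exact wStarDisc_huaWangR_le_general γ hγ hsum (bddAbove_range_succ_mul_of_antitone
    (fun j => hγ _ (by omega)) (antitone_nat_of_succ_le fun j => hdec _ (by omega)) hsum) δ hδ
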